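/- arXiv:1607.01649 — 2 statements merged into one kernel-verified Lean document; each statement's English description precedes it below -/
import Mathlib

section
/- Let T be a real m×n matrix, let r be a positive integer, and let α ∈ (0,1). Draw an independent family g_1, …, g_r of standard Gaussian vectors in ℝⁿ. Then ‖T‖ ≤ (1/α)·√(2/π)·max_{i=1,…,r} ‖T g_i‖ holds with probability at least 1 − α^r. -/
open MeasureTheory ProbabilityTheory Matrix BigOperators

noncomputable section

/-- Euclidean norm of a real vector. -/
def euclNorm {ι : Type*} [Fintype ι] (x : ι → ℝ) : ℝ := Real.sqrt (∑ i, x i ^ 2)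

/-- Spectral norm of a real matrix: the supremum of `‖A x‖` over unit vectors `x`. -/
def specNorm {ι κ : Type*} [Fintype ι] [Fintype κ] (A : Matrix ι κ ℝ) : ℝ :=
  sSup {r : ℝ | ∃ x : κ → ℝ, euclNorm x = 1 ∧ r = euclNorm (A.mulVec x)}

/-- The law of a family of `r` independent standard Gaussian vectors in `ℝⁿ`. -/
def stdGaussianVectors (r n : ℕ) : Measure (Fin r → Fin n → ℝ) :=
  Measure.pi fun _ => Measure.pi fun _ => gaussianReal 0 1

/-!
The operator norm of `T : E →L[ℝ] F` is attained on the compact unit ball, say at `x`, and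
Hahn–Banach supplies a functional `φ` of norm at most `1` with `φ (T x) = ‖T‖`. Hence
`|φ (T g)| ≤ ‖T g‖` for all `g`, while `φ ∘ T` has norm `‖T‖`, so that `φ (T g)` is a centered
real Gaussian of standard deviation `‖T‖`. Its density is at most `(√(2π) ‖T‖)⁻¹`, whence
`‖T g‖ < ε ‖T‖` has probability at most `√(2/π) ε`. By independence, all `r` samples fail with
`ε = α / √(2/π)` with probability at most `α ^ r`.
-/

section NormAttainment

variable {𝕜 E F : Type*} [RCLike 𝕜] [NormedAddCommGroup E] [NormedSpace 𝕜 E] [ProperSpace E]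
  [SeminormedAddCommGroup F] [NormedSpace 𝕜 F]

lemma exists_norm_le_one_norm_apply_eq_opNorm (T : E →L[𝕜] F) :
    ∃ x : E, ‖x‖ ≤ 1 ∧ ‖T x‖ = ‖T‖ := by
  have hmem : ‖T‖ ∈ (fun x => ‖T x‖) '' Metric.closedBall 0 1 := by
    rw [← T.sSup_unitClosedBall_eq_norm]
    exact ((isCompact_closedBall 0 1).image (by fun_prop)).sSup_mem
      ((Metric.nonempty_closedBall.2 zero_le_one).image _)
  simpa only [Set.mem_image, mem_closedBall_zero_iff] using hmem

lemma exists_dual_norm_comp_eq_opNorm (T : E →L[𝕜] F) :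
    ∃ φ : StrongDual 𝕜 F, ‖φ‖ ≤ 1 ∧ ‖φ ∘L T‖ = ‖T‖ := by
  obtain ⟨x, hx, hTx⟩ := exists_norm_le_one_norm_apply_eq_opNorm T
  obtain ⟨φ, hφ, hφTx⟩ := exists_dual_vector'' 𝕜 (T x)
  refine ⟨φ, hφ, le_antisymm ?_ ?_⟩
  · exact (φ.opNorm_comp_le T).trans (mul_le_of_le_one_left (norm_nonneg T) hφ)
  · calc ‖T‖ = ‖(φ ∘L T) x‖ := by simp [hφTx, hTx]
      _ ≤ ‖φ ∘L T‖ := (φ ∘L T).unit_le_opNorm x hx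

end NormAttainment

section SmallBall

open scoped NNReal

lemma gaussianPDFReal_le_inv_sqrt (μ : ℝ) (v : ℝ≥0) (x : ℝ) :
    gaussianPDFReal μ v x ≤ (√(2 * Real.pi * v))⁻¹ := by
  have hexponent : -(x - μ) ^ 2 / (2 * v) ≤ 0 :=
    div_nonpos_of_nonpos_of_nonneg (neg_nonpos.2 (sq_nonneg _)) (by positivity)
  exact mul_le_of_le_one_right (by positivity) (Real.exp_le_one_iff.2 hexponent)

lemma gaussianReal_le_mul_volume (μ : ℝ) {v : ℝ≥0} (hv : v ≠ 0) (s : Set ℝ) :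
    gaussianReal μ v s ≤ ENNReal.ofReal (√(2 * Real.pi * v))⁻¹ * volume s := by
  calc gaussianReal μ v s = ∫⁻ x in s, gaussianPDF μ v x := gaussianReal_apply μ hv s
    _ ≤ ∫⁻ _ in s, ENNReal.ofReal (√(2 * Real.pi * v))⁻¹ :=
        lintegral_mono fun x => ENNReal.ofReal_le_ofReal (gaussianPDFReal_le_inv_sqrt μ v x)
    _ = _ := setLIntegral_const s _

lemma gaussianReal_Ioo_le_sqrt_mul (μ : ℝ) {σ : ℝ≥0} (hσ : σ ≠ 0) (ε : ℝ) :
    gaussianReal μ (σ ^ 2) (Set.Ioo (-(ε * σ)) (ε * σ)) ≤ ENNReal.ofReal (√(2 / Real.pi) * ε) := by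
  refine (gaussianReal_le_mul_volume μ (pow_ne_zero 2 hσ) _).trans_eq ?_
  rw [Real.volume_Ioo, ← ENNReal.ofReal_mul (by positivity)]
  have hsqrt : √(2 / Real.pi) * √(2 * Real.pi) = 2 := by
    rw [← Real.sqrt_mul (by positivity), Real.sqrt_eq_iff_mul_self_eq_of_pos two_pos]
    field_simp
  have hsqrt_mul_sq : √(2 * Real.pi * (σ ^ 2 : ℝ≥0)) = √(2 * Real.pi) * σ := by
    rw [NNReal.coe_pow, Real.sqrt_mul (by positivity), Real.sqrt_sq σ.coe_nonneg]
  rw [hsqrt_mul_sq]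
  congr 1
  field_simp
  linear_combination (-ε) * hsqrt

variable {E F : Type*} [NormedAddCommGroup E] [InnerProductSpace ℝ E] [FiniteDimensional ℝ E]
  [MeasurableSpace E] [BorelSpace E] [SeminormedAddCommGroup F] [NormedSpace ℝ F]

lemma hasLaw_dual_stdGaussian (L : StrongDual ℝ E) :
    HasLaw L (gaussianReal 0 (‖L‖₊ ^ 2)) (stdGaussian E) where
  map_eq := by
    rw [IsGaussian.map_eq_gaussianReal, integral_strongDual_stdGaussian, variance_dual_stdGaussian,
      ← coe_nnnorm, ← NNReal.coe_pow, Real.toNNReal_coe]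

lemma stdGaussian_abs_dual_lt_le (L : StrongDual ℝ E) (ε : ℝ) :
    stdGaussian E {x | |L x| < ε * ‖L‖} ≤ ENNReal.ofReal (√(2 / Real.pi) * ε) := by
  rcases eq_or_ne L 0 with rfl | hL
  · simp
  simp only [abs_lt]
  refine ((hasLaw_dual_stdGaussian L).measure_eq (p := (· ∈ Set.Ioo (-(ε * ‖L‖)) (ε * ‖L‖)))
    measurableSet_Ioo).trans_le ?_
  exact gaussianReal_Ioo_le_sqrt_mul 0 (nnnorm_ne_zero_iff.2 hL) ε

lemma stdGaussian_norm_apply_lt_le (T : E →L[ℝ] F) (ε : ℝ) :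
    stdGaussian E {x | ‖T x‖ < ε * ‖T‖} ≤ ENNReal.ofReal (√(2 / Real.pi) * ε) := by
  obtain ⟨φ, hφ, hφT⟩ := exists_dual_norm_comp_eq_opNorm T
  refine (measure_mono fun x hx => ?_).trans (stdGaussian_abs_dual_lt_le (φ ∘L T) ε)
  calc |φ (T x)| ≤ ‖T x‖ := φ.le_of_opNorm_le_of_le hφ le_rfl |>.trans_eq (one_mul _)
    _ < ε * ‖T‖ := hx
    _ = ε * ‖φ ∘L T‖ := by rw [hφT]

end SmallBall

section IndependentSamples

variable {ι Ω E F : Type*} [Fintype ι] [MeasurableSpace Ω] {P : Measure Ω}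
  [NormedAddCommGroup E] [InnerProductSpace ℝ E] [FiniteDimensional ℝ E]
  [MeasurableSpace E] [BorelSpace E] [SeminormedAddCommGroup F] [NormedSpace ℝ F]
  {g : ι → Ω → E}

lemma measure_forall_norm_apply_lt_le (hindep : iIndepFun g P)
    (hlaw : ∀ i, HasLaw (g i) (stdGaussian E) P) (T : E →L[ℝ] F) (ε : ℝ) :
    P {ω | ∀ i, ‖T (g i ω)‖ < ε * ‖T‖} ≤
      ENNReal.ofReal (√(2 / Real.pi) * ε) ^ Fintype.card ι := by
  have hmeas : MeasurableSet {x | ‖T x‖ < ε * ‖T‖} :=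
    (isOpen_lt (by fun_prop) continuous_const).measurableSet
  calc P {ω | ∀ i, ‖T (g i ω)‖ < ε * ‖T‖}
      = ∏ i, P {ω | ‖T (g i ω)‖ < ε * ‖T‖} := by
        rw [Set.ofPred_forall]
        exact hindep.meas_iInter fun i => ⟨_, hmeas, rfl⟩
    _ ≤ ∏ _ : ι, ENNReal.ofReal (√(2 / Real.pi) * ε) := by
        refine Finset.prod_le_prod' fun i _ => ?_
        exact ((hlaw i).measure_eq hmeas).trans_le (stdGaussian_norm_apply_lt_le T ε)
    _ = ENNReal.ofReal (√(2 / Real.pi) * ε) ^ Fintype.card ι := by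
        rw [Finset.prod_const, Finset.card_univ]

theorem randomized_norm_estimate_general (hindep : iIndepFun g P)
    (hlaw : ∀ i, HasLaw (g i) (stdGaussian E) P) (T : E →L[ℝ] F) {α : ℝ} (hα : 0 < α) :
    ENNReal.ofReal (1 - α ^ Fintype.card ι) ≤
      P {ω | ‖T‖ ≤ (1 / α) * √(2 / Real.pi) * ⨆ i, ‖T (g i ω)‖} := by
  have : IsProbabilityMeasure P := hindep.isProbabilityMeasure
  set S := {ω | ‖T‖ ≤ (1 / α) * √(2 / Real.pi) * ⨆ i, ‖T (g i ω)‖}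
  have hcompl_subset : Sᶜ ⊆ {ω | ∀ i, ‖T (g i ω)‖ < α / √(2 / Real.pi) * ‖T‖} := by
    intro ω hω i
    have hle : ‖T (g i ω)‖ ≤ ⨆ i, ‖T (g i ω)‖ :=
      le_ciSup (f := fun i => ‖T (g i ω)‖) (Set.finite_range _).bddAbove i
    have hlt : (1 / α) * √(2 / Real.pi) * ⨆ i, ‖T (g i ω)‖ < ‖T‖ := not_le.1 hω
    rw [← inv_div, ← div_eq_inv_mul, lt_div_iff₀' (by positivity), ← one_div_mul_eq_div]
    exact hlt.trans_le' (by gcongr)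
  have hcompl_le : P Sᶜ ≤ ENNReal.ofReal (α ^ Fintype.card ι) := by
    refine (measure_mono hcompl_subset).trans
      ((measure_forall_norm_apply_lt_le hindep hlaw T _).trans_eq ?_)
    rw [mul_div_cancel₀ _ (by positivity), ENNReal.ofReal_pow hα.le]
  rw [ENNReal.ofReal_sub _ (by positivity), ENNReal.ofReal_one, tsub_le_iff_right]
  calc 1 = P Set.univ := measure_univ.symm
    _ ≤ P S + P Sᶜ := measure_univ_le_add_compl S
    _ ≤ P S + ENNReal.ofReal (α ^ Fintype.card ι) := by gcongr

end IndependentSamples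

section MatrixNorms

lemma euclNorm_eq_norm_toLp {ι : Type*} [Fintype ι] (x : ι → ℝ) :
    euclNorm x = ‖WithLp.toLp 2 x‖ := by
  simp only [euclNorm, EuclideanSpace.norm_eq, Real.norm_eq_abs, sq_abs]

lemma euclNorm_mulVec {ι κ : Type*} [Fintype ι] [Fintype κ] [DecidableEq κ] (A : Matrix ι κ ℝ)
    (x : κ → ℝ) :
    euclNorm (A.mulVec x) = ‖(toEuclideanLin A).toContinuousLinearMap (WithLp.toLp 2 x)‖ :=
  euclNorm_eq_norm_toLp _

lemma specNorm_eq_opNorm {ι κ : Type*} [Fintype ι] [Fintype κ] [DecidableEq κ]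
    (A : Matrix ι κ ℝ) : specNorm A = ‖(toEuclideanLin A).toContinuousLinearMap‖ := by
  rw [← ContinuousLinearMap.sSup_sphere_eq_norm, specNorm]
  congr 1
  ext r
  simp_rw [euclNorm_mulVec]
  simp only [euclNorm_eq_norm_toLp, Set.mem_ofPred_eq, Set.mem_image,
    mem_sphere_zero_iff_norm, (WithLp.toLp_surjective 2).exists, eq_comm (a := r)]

lemma hasLaw_toLp_stdGaussianVectors (r n : ℕ) (i : Fin r) :
    HasLaw (fun g : Fin r → Fin n → ℝ => WithLp.toLp 2 (g i))
      (stdGaussian (EuclideanSpace ℝ (Fin n))) (stdGaussianVectors r n) :=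
  HasLaw.comp ⟨(WithLp.measurable_toLp 2 _).aemeasurable, map_pi_eq_stdGaussian⟩
    (measurePreserving_eval (fun _ => Measure.pi fun _ => gaussianReal 0 1) i).hasLaw

lemma iIndepFun_toLp_stdGaussianVectors (r n : ℕ) :
    iIndepFun (fun (i : Fin r) (g : Fin r → Fin n → ℝ) => WithLp.toLp 2 (g i))
      (stdGaussianVectors r n) :=
  iIndepFun_pi (X := fun _ => WithLp.toLp 2) fun _ =>
    (WithLp.measurable_toLp 2 _).aemeasurable

end MatrixNorms

/-- **Randomized a posteriori norm estimation** (Lemma 4.1 of Halko–Martinsson–Tropp):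
with probability at least `1 - α ^ r`, the spectral norm of `T` is bounded by
`(1/α) √(2/π) maxᵢ ‖T gᵢ‖`. -/
theorem randomized_norm_estimate (m n r : ℕ) (hr : 0 < r) (α : ℝ) (hα : α ∈ Set.Ioo (0 : ℝ) 1)
    (T : Matrix (Fin m) (Fin n) ℝ) :
    stdGaussianVectors r n
        {g | specNorm T ≤
          (1 / α) * Real.sqrt (2 / Real.pi) * ⨆ i : Fin r, euclNorm (T.mulVec (g i))} ≥
      ENNReal.ofReal (1 - α ^ r) := by
  simpa only [specNorm_eq_opNorm, euclNorm_mulVec, Fintype.card_fin] using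
    randomized_norm_estimate_general (iIndepFun_toLp_stdGaussianVectors r n)
      (hasLaw_toLp_stdGaussianVectors r n) (toEuclideanLin T).toContinuousLinearMap hα.1

end
end

section
/- Let A be an m×n matrix of exact rank k, with k < min(m,n). Then there exists an index vector J_s ⊆ {1,…,n} of length k and a k×n matrix Z such that A = A(:, J_s) · Z, where every entry of Z is bounded in modulus by 1 and the k×k submatrix Z(:, J_s) is the identity. -/
open Matrix BigOperators

/-!
Among all families of `A.rank` columns of `A`, take one whose determinant, relative to a fixed basis
of the column space, has maximal norm. It is a basis of the column space, and by Cramer's rule each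
coordinate of a column in it is the quotient of two such determinants, with the maximal one in the
denominator; hence it has norm at most one.
-/

section Basis

variable {ι κ R K V N : Type*}

theorem exists_basis_eq_comp_of_span_eq_top [DivisionRing K] [AddCommGroup V] [Module K V]
    (b : Module.Basis ι K V) {c : κ → V} (hc : Submodule.span K (Set.range c) = ⊤) :
    ∃ (J : ι → κ) (e : Module.Basis ι K V), ⇑e = c ∘ J := by
  obtain ⟨κ', a, -, hspan, hli⟩ := exists_linearIndependent' K c
  let e : Module.Basis κ' K V := .mk hli (hspan.trans hc).ge
  let σ : ι ≃ κ' := b.indexEquiv e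
  exact ⟨a ∘ σ, e.reindex σ.symm, by ext i; simp [e]⟩

theorem toMatrix_submatrix_eq_one_of_eq_comp [DecidableEq ι] [CommSemiring R] [AddCommMonoid V]
    [Module R V] {c : κ → V} {J : ι → κ} {e : Module.Basis ι R V} (he : ⇑e = c ∘ J) :
    (e.toMatrix c).submatrix id J = 1 := by
  rw [← e.toMatrix_self, he]
  rfl

theorem alternatingMap_update_basis [Finite ι] [DecidableEq ι] [Semiring R] [AddCommMonoid V]
    [Module R V] [AddCommMonoid N] [Module R N] (f : V [⋀^ι]→ₗ[R] N) (e : Module.Basis ι R V)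
    (i : ι) (v : V) : f (Function.update e i v) = e.repr v i • f e := by
  have := Fintype.ofFinite ι
  calc f (Function.update e i v)
      = ∑ j, e.repr v j • f (Function.update e i (e j)) := by
        conv_lhs => rw [← e.sum_repr v]
        simp only [AlternatingMap.map_update_sum, AlternatingMap.map_update_smul]
    _ = e.repr v i • f (Function.update e i (e i)) :=
        Fintype.sum_eq_single i fun j hji => by rw [f.map_update_self e hji.symm, smul_zero]
    _ = e.repr v i • f e := by rw [Function.update_eq_self]

variable [NormedField K] [AddCommGroup V] [Module K V]

theorem norm_repr_le_one_iff_norm_det_update_le [Fintype ι] [DecidableEq ι]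
    (b e : Module.Basis ι K V) (i : ι) (v : V) :
    ‖e.repr v i‖ ≤ 1 ↔ ‖b.det (Function.update e i v)‖ ≤ ‖b.det e‖ := by
  have hpos : 0 < ‖b.det e‖ := norm_pos_iff.mpr (b.isUnit_det e).ne_zero
  rw [alternatingMap_update_basis, norm_smul, mul_le_iff_le_one_left hpos]

theorem exists_basis_eq_comp_norm_toMatrix_le_one [Finite ι] [Finite κ] (b : Module.Basis ι K V)
    {c : κ → V} (hc : Submodule.span K (Set.range c) = ⊤) :
    ∃ (J : ι → κ) (e : Module.Basis ι K V), ⇑e = c ∘ J ∧ ∀ i j, ‖e.toMatrix c i j‖ ≤ 1 := by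
  classical
  have := Fintype.ofFinite ι
  obtain ⟨J₀, e₀, he₀⟩ := exists_basis_eq_comp_of_span_eq_top b hc
  have : Nonempty (ι → κ) := ⟨J₀⟩
  obtain ⟨J, hmax⟩ := Finite.exists_max fun J : ι → κ => ‖b.det (c ∘ J)‖
  have hdet : b.det (c ∘ J) ≠ 0 := by
    have hdet₀ : 0 < ‖b.det (c ∘ J₀)‖ := norm_pos_iff.mpr (he₀ ▸ b.isUnit_det e₀).ne_zero
    exact norm_pos_iff.mp (hdet₀.trans_le (hmax J₀))
  obtain ⟨hli, hspan⟩ := b.is_basis_iff_det.mpr hdet.isUnit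
  let e : Module.Basis ι K V := .mk hli hspan.ge
  have he : ⇑e = c ∘ J := Module.Basis.coe_mk hli hspan.ge
  refine ⟨J, e, he, fun i j => (norm_repr_le_one_iff_norm_det_update_le b e i (c j)).mpr ?_⟩
  rw [he, ← Function.comp_update]
  exact hmax (Function.update J i j)

end Basis

section ColumnSpace

variable {m n ι R : Type*} [CommSemiring R] (A : Matrix m n R)

/-- The columns of a matrix as vectors of its column space (rather than of `m → R`), so that bases
of the column space can be chosen among them. -/
def spanCol (j : n) : Submodule.span R (Set.range A.col) :=
  ⟨A.col j, Submodule.subset_span (Set.mem_range_self j)⟩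

theorem span_range_spanCol : Submodule.span R (Set.range (spanCol A)) = ⊤ :=
  (Submodule.span_range_subtype_eq_top_iff _ _).mpr rfl

variable {A}

theorem submatrix_mul_toMatrix_spanCol [Fintype ι] {J : ι → n}
    {e : Module.Basis ι R (Submodule.span R (Set.range A.col))} (he : ⇑e = spanCol A ∘ J) :
    A.submatrix id J * e.toMatrix (spanCol A) = A := by
  ext r j
  have hcol : ∑ i, e.toMatrix (spanCol A) i j • A.col (J i) = A.col j := by
    simpa [he, spanCol] using congrArg Subtype.val (e.sum_toMatrix_smul_self (spanCol A) j)
  simpa [mul_apply, mul_comm] using congrFun hcol r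

end ColumnSpace

theorem exists_well_conditioned_column_id_general {m n K : Type*} [Fintype n] [NormedField K]
    (A : Matrix m n K) :
    ∃ Js : Fin A.rank → n, Function.Injective Js ∧
      ∃ Z : Matrix (Fin A.rank) n K,
        A = A.submatrix id Js * Z ∧
        (∀ i j, ‖Z i j‖ ≤ 1) ∧
        Z.submatrix id Js = 1 := by
  have := FiniteDimensional.span_of_finite K (Set.finite_range A.col)
  let b : Module.Basis (Fin A.rank) K (Submodule.span K (Set.range A.col)) :=
    Module.finBasisOfFinrankEq K _ A.rank_eq_finrank_span_cols.symm
  obtain ⟨Js, e, he, hle⟩ := exists_basis_eq_comp_norm_toMatrix_le_one b (span_range_spanCol A)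
  have hinj : Function.Injective Js := .of_comp (f := spanCol A) (he ▸ e.injective)
  exact ⟨Js, hinj, e.toMatrix (spanCol A), (submatrix_mul_toMatrix_spanCol he).symm, hle,
    toMatrix_submatrix_eq_one_of_eq_comp he⟩

/-- **Existence of a well-conditioned column interpolative decomposition**: any rank-`k`
matrix `A` (with `k < min(m,n)`) can be written as `A = A(:, J_s) Z` where every entry of
`Z` is bounded in modulus by one and `Z(:, J_s)` is the `k × k` identity. -/
theorem exists_well_conditioned_column_id (m n k : ℕ) (hk : k < min m n)
    (A : Matrix (Fin m) (Fin n) ℝ) (hrank : A.rank = k) :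
    ∃ (Js : Fin k → Fin n), Function.Injective Js ∧
      ∃ Z : Matrix (Fin k) (Fin n) ℝ,
        A = A.submatrix id Js * Z ∧
        (∀ i j, |Z i j| ≤ 1) ∧
        Z.submatrix id Js = 1 := by
  subst hrank
  exact exists_well_conditioned_column_id_general A
end
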